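/- For τ in the upper half-plane and z ∈ ℂ with ϑ₁₀(2τ,z), ϑ₀₀(2τ,z), ϑ₁₀(τ,z) all nonzero, one has ϑ₀₀(2τ,z)/ϑ₁₀(2τ,z) + ϑ₁₀(2τ,z)/ϑ₀₀(2τ,z) = (η(τ)⁶ / (η(τ/2)² η(2τ)⁴)) · ϑ₀₀(τ,z)/ϑ₁₀(τ,z). -/

import Mathlib

open Real Complex Filter Topology

noncomputable section

noncomputable def theta00 (τ z : ℂ) : ℂ :=
  ∑' n : ℤ, Complex.exp (2*(π:ℂ)*Complex.I*(n:ℂ)*z) *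
    Complex.exp (2*(π:ℂ)*Complex.I*τ*((n:ℂ)^2/2))

noncomputable def theta01 (τ z : ℂ) : ℂ :=
  ∑' n : ℤ, (-1:ℂ)^n * Complex.exp (2*(π:ℂ)*Complex.I*(n:ℂ)*z) *
    Complex.exp (2*(π:ℂ)*Complex.I*τ*((n:ℂ)^2/2))

noncomputable def theta10 (τ z : ℂ) : ℂ :=
  ∑' n : ℤ, Complex.exp (2*(π:ℂ)*Complex.I*((n:ℂ)+1/2)*z) *
    Complex.exp (2*(π:ℂ)*Complex.I*τ*((1/2)*((n:ℂ)+1/2)^2))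

noncomputable def theta11 (τ z : ℂ) : ℂ :=
  Complex.I * ∑' n : ℤ, (-1:ℂ)^n * Complex.exp (2*(π:ℂ)*Complex.I*((n:ℂ)+1/2)*z) *
    Complex.exp (2*(π:ℂ)*Complex.I*τ*((1/2)*((n:ℂ)+1/2)^2))

noncomputable def dedekindEta (τ : ℂ) : ℂ :=
  Complex.exp ((π:ℂ)*Complex.I*τ/12) *
    ∏' n : ℕ, (1 - Complex.exp (2*(π:ℂ)*Complex.I*τ*((n:ℂ)+1)))

/-- The finite Euler product `∏ (1 - q ^ (k + 1))` over `k < n`. -/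
def eulerProd (q : ℂ) (n : ℕ) : ℂ := ∏ k ∈ Finset.range n, (1 - q ^ (k + 1))

lemma eulerProd_succ (q : ℂ) (n : ℕ) :
    eulerProd q (n + 1) = eulerProd q n * (1 - q ^ (n + 1)) :=
  Finset.prod_range_succ _ _

lemma one_sub_pow_ne_zero {q : ℂ} (hq : ‖q‖ < 1) (n : ℕ) : 1 - q ^ (n + 1) ≠ 0 := by
  rw [sub_ne_zero]
  intro h
  have h' := congrArg norm h
  rw [norm_one, norm_pow] at h'
  exact (pow_lt_one₀ (norm_nonneg q) hq n.succ_ne_zero).ne' h'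

lemma eulerProd_ne_zero {q : ℂ} (hq : ‖q‖ < 1) (n : ℕ) : eulerProd q n ≠ 0 :=
  Finset.prod_ne_zero_iff.mpr fun k _ ↦ one_sub_pow_ne_zero hq k

/-- The `q`-binomial theorem. -/
lemma sum_antidiagonal_qBinomial {q : ℂ} (hq : ‖q‖ < 1) (w : ℂ) (N : ℕ) :
    ∑ x ∈ Finset.HasAntidiagonal.antidiagonal N,
        q ^ (x.1.choose 2) / (eulerProd q x.1 * eulerProd q x.2) * w ^ x.1 =
      (∏ k ∈ Finset.range N, (1 + w * q ^ k)) / eulerProd q N := by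
  induction N with
  | zero => simp [eulerProd]
  | succ N ih =>
    set b : ℕ × ℕ → ℂ := fun x ↦
      q ^ (x.1.choose 2) / (eulerProd q x.1 * eulerProd q x.2) * w ^ x.1 with hb
    have hleft (x : ℕ × ℕ) : (1 - q ^ (x.2 + 1)) * b (x.1, x.2 + 1) = b x := by
      have h1 := eulerProd_ne_zero hq x.1
      have h2 := eulerProd_ne_zero hq x.2
      have h3 := one_sub_pow_ne_zero hq x.2
      simp only [hb, eulerProd_succ]
      field_simp
    have hright (x : ℕ × ℕ) :
        q ^ x.2 * (1 - q ^ (x.1 + 1)) * b (x.1 + 1, x.2) = w * q ^ (x.1 + x.2) * b x := by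
      have h1 := eulerProd_ne_zero hq x.1
      have h2 := eulerProd_ne_zero hq x.2
      have h3 := one_sub_pow_ne_zero hq x.1
      have h4 : (x.1 + 1).choose 2 = x.1 + x.1.choose 2 := by
        rw [Nat.choose_succ_succ' x.1 1, Nat.choose_one_right]
      simp only [hb, eulerProd_succ, h4]
      field_simp
      ring
    have hsplit : (1 - q ^ (N + 1)) * ∑ x ∈ Finset.HasAntidiagonal.antidiagonal (N + 1), b x =
        (1 + w * q ^ N) * ∑ x ∈ Finset.HasAntidiagonal.antidiagonal N, b x := by
      have e1 : (1 - q ^ (N + 1)) * ∑ x ∈ Finset.HasAntidiagonal.antidiagonal (N + 1), b x =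
          ∑ x ∈ Finset.HasAntidiagonal.antidiagonal (N + 1), (1 - q ^ x.2) * b x +
            ∑ x ∈ Finset.HasAntidiagonal.antidiagonal (N + 1), q ^ x.2 * (1 - q ^ x.1) * b x := by
        rw [Finset.mul_sum, ← Finset.sum_add_distrib]
        refine Finset.sum_congr rfl fun x hx ↦ ?_
        rw [← Finset.HasAntidiagonal.mem_antidiagonal.mp hx, pow_add]
        ring
      rw [e1, Finset.Nat.sum_antidiagonal_succ', Finset.Nat.sum_antidiagonal_succ]
      simp only [hleft, hright, pow_zero, sub_self, mul_zero, zero_mul, zero_add]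
      rw [add_mul, one_mul, Finset.mul_sum]
      congr 1
      refine Finset.sum_congr rfl fun x hx ↦ ?_
      rw [Finset.HasAntidiagonal.mem_antidiagonal.mp hx]
    have h3 := one_sub_pow_ne_zero hq N
    have h4 := eulerProd_ne_zero hq N
    rw [ih] at hsplit
    rw [Finset.prod_range_succ, eulerProd_succ, eq_div_iff (mul_ne_zero h4 h3)]
    rw [mul_comm (eulerProd q N), ← mul_assoc, mul_comm _ (1 - q ^ (N + 1)), hsplit]
    field_simp

lemma prod_one_add_mul_inv_pow {p x : ℂ} (hp : p ≠ 0) (hx : x ≠ 0) (n : ℕ) :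
    ∏ k ∈ Finset.range n, (1 + x * (p ^ (2 * k + 1))⁻¹) =
      x ^ n * (p ^ (n ^ 2))⁻¹ * ∏ k ∈ Finset.range n, (1 + x⁻¹ * p ^ (2 * k + 1)) := by
  induction n with
  | zero => simp
  | succ n ih =>
    rw [Finset.prod_range_succ, ih, Finset.prod_range_succ,
      show (n + 1) ^ 2 = n ^ 2 + (2 * n + 1) by ring, pow_add p]
    field_simp
    ring

lemma prod_range_two_mul_one_add {p x : ℂ} (hp : p ≠ 0) (hx : x ≠ 0) (n : ℕ) :
    ∏ k ∈ Finset.range (2 * n), (1 + x * p * (p ^ (2 * n))⁻¹ * (p ^ 2) ^ k) =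
      x ^ n * (p ^ (n ^ 2))⁻¹ *
        ∏ k ∈ Finset.range n, ((1 + x * p ^ (2 * k + 1)) * (1 + x⁻¹ * p ^ (2 * k + 1))) := by
  rw [two_mul n, Finset.prod_range_add, ← Finset.prod_range_reflect, Finset.prod_mul_distrib,
    mul_left_comm, ← prod_one_add_mul_inv_pow hp hx, mul_comm]
  congr 1
  · refine Finset.prod_congr rfl fun k _ ↦ ?_
    rw [← pow_mul]
    field_simp
    ring
  · refine Finset.prod_congr rfl fun k hk ↦ ?_
    obtain ⟨d, rfl⟩ := Nat.exists_eq_add_of_lt (Finset.mem_range.mp hk)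
    rw [← pow_mul, show k + d + 1 - 1 - k = d by omega]
    field_simp
    ring

lemma two_mul_choose_two_add (i : ℕ) : 2 * i.choose 2 + i = i ^ 2 := by
  induction i with
  | zero => rfl
  | succ i ih =>
    rw [Nat.choose_succ_succ' i 1, Nat.choose_one_right]
    linarith

/-- The coefficient of `p ^ (m ^ 2) * x ^ m` in the finite Jacobi triple product, `q = p ^ 2`. -/
def centralQBinomial (q : ℂ) (n : ℕ) (m : ℤ) : ℂ :=
  if m ∈ Finset.Icc (-n : ℤ) n then
    eulerProd q (2 * n) / (eulerProd q (n + m).toNat * eulerProd q (n - m).toNat) else 0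

/-- The finite Jacobi triple product identity. -/
lemma tsum_centralQBinomial {p x : ℂ} (hp : p ≠ 0) (hp1 : ‖p‖ < 1) (hx : x ≠ 0) (n : ℕ) :
    ∑' m : ℤ, centralQBinomial (p ^ 2) n m * (p ^ (m ^ 2) * x ^ m) =
      ∏ k ∈ Finset.range n, ((1 + x * p ^ (2 * k + 1)) * (1 + x⁻¹ * p ^ (2 * k + 1))) := by
  have hq : ‖p ^ 2‖ < 1 := by
    rw [norm_pow]; exact pow_lt_one₀ (norm_nonneg p) hp1 two_ne_zero
  have hQ := eulerProd_ne_zero hq (2 * n)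
  have hprod := sum_antidiagonal_qBinomial hq (x * p * (p ^ (2 * n))⁻¹) (2 * n)
  rw [prod_range_two_mul_one_add hp hx, eq_div_iff hQ] at hprod
  have hc : x ^ n * (p ^ (n ^ 2))⁻¹ ≠ 0 := by positivity
  apply mul_left_cancel₀ hc
  rw [← hprod, tsum_eq_sum (s := Finset.Icc (-n : ℤ) n)
    (fun m hm ↦ by rw [centralQBinomial, if_neg hm, zero_mul]), Finset.mul_sum, Finset.sum_mul]
  refine Finset.sum_nbij' (fun m ↦ ((n + m).toNat, (n - m).toNat)) (fun y ↦ (y.1 : ℤ) - n)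
    ?_ ?_ ?_ ?_ ?_
  · intro m hm
    rw [Finset.mem_Icc] at hm
    rw [Finset.HasAntidiagonal.mem_antidiagonal]
    omega
  · rintro ⟨i, j⟩ hy
    rw [Finset.HasAntidiagonal.mem_antidiagonal] at hy
    rw [Finset.mem_Icc]
    omega
  · intro m hm
    rw [Finset.mem_Icc] at hm
    simp only
    omega
  · rintro ⟨i, j⟩ hy
    rw [Finset.HasAntidiagonal.mem_antidiagonal] at hy
    ext <;> simp only <;> omega
  · intro m hm
    rw [centralQBinomial, if_pos hm]
    rw [Finset.mem_Icc] at hm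
    simp only
    obtain ⟨i, hi⟩ := Int.eq_ofNat_of_zero_le (show 0 ≤ n + m by omega)
    obtain rfl : m = (i : ℤ) - n := by omega
    have h1 := eulerProd_ne_zero hq i
    have h2 := eulerProd_ne_zero hq ((n : ℤ) - (i - n)).toNat
    rw [show ((n : ℤ) + (i - n)).toNat = i by omega]
    have key : x ^ n * (p ^ (n ^ 2))⁻¹ * (p ^ (((i : ℤ) - n) ^ 2) * x ^ ((i : ℤ) - n)) =
        (p ^ 2) ^ (i.choose 2) * (x * p * (p ^ (2 * n))⁻¹) ^ i := by
      have hch := two_mul_choose_two_add i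
      rw [zpow_sub₀ hx, ← pow_mul]
      have : p ^ (((i : ℤ) - n) ^ 2) =
          p ^ (2 * i.choose 2) * p ^ i * (p ^ (2 * n * i))⁻¹ * p ^ (n ^ 2) := by
        rw [← pow_add, hch, ← zpow_natCast, ← zpow_natCast, ← zpow_natCast, ← zpow_neg,
          ← zpow_add₀ hp, ← zpow_add₀ hp]
        congr 1
        push_cast
        ring
      rw [this, zpow_natCast, zpow_natCast, mul_pow, mul_pow, inv_pow, ← pow_mul]
      field_simp
    rw [mul_left_comm, key]
    field_simp

lemma tendsto_eulerProd {q : ℂ} (hq : ‖q‖ < 1) :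
    Tendsto (eulerProd q) atTop (𝓝 (∏' k : ℕ, (1 - q ^ (k + 1)))) :=
  (ModularForm.multipliable_one_sub_pow hq).tendsto_prod_tprod_nat

lemma summable_norm_pow_succ {q : ℂ} (hq : ‖q‖ < 1) : Summable fun k : ℕ ↦ ‖q ^ (k + 1)‖ := by
  simpa using (summable_nat_add_iff 1).mpr (summable_geometric_of_lt_one (norm_nonneg _) hq)

lemma tprod_one_sub_pow_ne_zero {q : ℂ} (hq : ‖q‖ < 1) : ∏' k : ℕ, (1 - q ^ (k + 1)) ≠ 0 := by
  simp_rw [sub_eq_add_neg]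
  refine tprod_one_add_ne_zero_of_summable (fun k ↦ ?_) (by simpa using summable_norm_pow_succ hq)
  rw [← sub_eq_add_neg]
  exact one_sub_pow_ne_zero hq k

lemma tendsto_centralQBinomial {q : ℂ} (hq : ‖q‖ < 1) (m : ℤ) :
    Tendsto (fun n ↦ centralQBinomial q n m) atTop (𝓝 (∏' k : ℕ, (1 - q ^ (k + 1)))⁻¹) := by
  have hE := tprod_one_sub_pow_ne_zero hq
  have hT := tendsto_eulerProd hq
  have h0 : Tendsto (fun n : ℕ ↦ 2 * n) atTop atTop :=
    tendsto_atTop_atTop.mpr fun b ↦ ⟨b, fun n hn ↦ by omega⟩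
  have h1 : Tendsto (fun n : ℕ ↦ ((n : ℤ) + m).toNat) atTop atTop :=
    tendsto_atTop_atTop.mpr fun b ↦ ⟨b + m.natAbs, fun n hn ↦ by omega⟩
  have h2 : Tendsto (fun n : ℕ ↦ ((n : ℤ) - m).toNat) atTop atTop :=
    tendsto_atTop_atTop.mpr fun b ↦ ⟨b + m.natAbs, fun n hn ↦ by omega⟩
  have h3 := (hT.comp h0).div ((hT.comp h1).mul (hT.comp h2)) (mul_ne_zero hE hE)
  rw [div_mul_cancel_left₀ hE] at h3
  refine h3.congr' ?_
  filter_upwards [eventually_ge_atTop m.natAbs] with n hn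
  rw [centralQBinomial, if_pos (Finset.mem_Icc.mpr (by omega))]
  rfl

lemma exists_norm_centralQBinomial_le {q : ℂ} (hq : ‖q‖ < 1) :
    ∃ K, ∀ n m, ‖centralQBinomial q n m‖ ≤ K := by
  obtain ⟨A, hA⟩ := (tendsto_eulerProd hq).norm.bddAbove_range
  obtain ⟨B, hB⟩ :=
    ((tendsto_eulerProd hq).inv₀ (tprod_one_sub_pow_ne_zero hq)).norm.bddAbove_range
  replace hA n : ‖eulerProd q n‖ ≤ A := hA ⟨n, rfl⟩
  replace hB n : ‖(eulerProd q n)⁻¹‖ ≤ B := hB ⟨n, rfl⟩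
  have hA0 : 0 ≤ A := (norm_nonneg _).trans (hA 0)
  have hB0 : 0 ≤ B := (norm_nonneg _).trans (hB 0)
  refine ⟨A * (B * B), fun n m ↦ ?_⟩
  rw [centralQBinomial]
  split_ifs
  · rw [div_eq_mul_inv, mul_inv, norm_mul, norm_mul]
    gcongr <;> apply_assumption
  · rw [norm_zero]
    positivity

/-- The Jacobi triple product identity, as a limit of finite products. -/
lemma tendsto_jacobiTripleProduct {p x : ℂ} (hp : p ≠ 0) (hp1 : ‖p‖ < 1) (hx : x ≠ 0)
    (hs : Summable fun m : ℤ ↦ p ^ (m ^ 2) * x ^ m) :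
    Tendsto (fun n ↦ ∏ k ∈ Finset.range n,
        ((1 + x * p ^ (2 * k + 1)) * (1 + x⁻¹ * p ^ (2 * k + 1)))) atTop
      (𝓝 ((∏' k : ℕ, (1 - (p ^ 2) ^ (k + 1)))⁻¹ * ∑' m : ℤ, p ^ (m ^ 2) * x ^ m)) := by
  have hq : ‖p ^ 2‖ < 1 := by
    rw [norm_pow]; exact pow_lt_one₀ (norm_nonneg p) hp1 two_ne_zero
  obtain ⟨K, hK⟩ := exists_norm_centralQBinomial_le hq
  simp_rw [← tsum_centralQBinomial hp hp1 hx, ← tsum_mul_left]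
  refine tendsto_tsum_of_dominated_convergence (hs.norm.mul_left K)
    (fun m ↦ (tendsto_centralQBinomial hq m).mul_const _) (.of_forall fun n m ↦ ?_)
  rw [norm_mul]
  gcongr
  exact hK n m

lemma multipliable_one_add_pow {q : ℂ} (hq : ‖q‖ < 1) :
    Multipliable fun k : ℕ ↦ 1 + q ^ (k + 1) :=
  multipliable_one_add_of_summable (summable_norm_pow_succ hq)

lemma tprod_one_add_pow_mul {q : ℂ} (hq : ‖q‖ < 1) :
    (∏' k : ℕ, (1 + q ^ (k + 1))) * ∏' k : ℕ, (1 - q ^ (k + 1)) =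
      ∏' k : ℕ, (1 - (q ^ 2) ^ (k + 1)) := by
  rw [← (multipliable_one_add_pow hq).tprod_mul (ModularForm.multipliable_one_sub_pow hq)]
  exact tprod_congr fun k ↦ by ring

/-- The product evaluation of `∑ p ^ (m ^ 2)`. -/
lemma tsum_zpow_sq {p : ℂ} (hp : p ≠ 0) (hp1 : ‖p‖ < 1)
    (hs : Summable fun m : ℤ ↦ p ^ (m ^ 2)) :
    (∑' m : ℤ, p ^ (m ^ 2)) *
        ((∏' k : ℕ, (1 - p ^ (k + 1))) * ∏' k : ℕ, (1 - (p ^ 2) ^ (2 * (k + 1)))) ^ 2 =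
      (∏' k : ℕ, (1 - (p ^ 2) ^ (k + 1))) ^ 5 := by
  have hq : ‖p ^ 2‖ < 1 := by
    rw [norm_pow]; exact pow_lt_one₀ (norm_nonneg p) hp1 two_ne_zero
  have ha := tprod_one_add_pow_mul hp1
  have hb := tprod_one_add_pow_mul hq
  have hodd : Multipliable fun k : ℕ ↦ 1 + p ^ (2 * k + 1) :=
    multipliable_one_add_of_summable ((summable_norm_pow_succ hp1).comp_injective
      (i := fun k : ℕ ↦ 2 * k) fun a b h ↦ by simpa using h)
  have heven : Multipliable fun k : ℕ ↦ 1 + p ^ (2 * k + 1 + 1) := by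
    simpa [← pow_mul, mul_add] using multipliable_one_add_pow hq
  have hoe := tprod_even_mul_odd (f := fun k ↦ 1 + p ^ (k + 1)) hodd heven
  have he : ∏' k : ℕ, (1 + p ^ (2 * k + 1 + 1)) = ∏' k : ℕ, (1 + (p ^ 2) ^ (k + 1)) :=
    tprod_congr fun k ↦ by rw [← pow_mul, mul_add]
  have hlim := tendsto_jacobiTripleProduct hp hp1 one_ne_zero (by simpa using hs)
  simp only [inv_one, one_mul, one_zpow, mul_one] at hlim
  have hJ := tendsto_nhds_unique hlim (hodd.mul hodd).tendsto_prod_tprod_nat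
  rw [hodd.tprod_mul hodd] at hJ
  have hE := tprod_one_sub_pow_ne_zero hq
  rw [inv_mul_eq_iff_eq_mul₀ hE] at hJ
  rw [he] at hoe
  simp_rw [pow_mul (p ^ 2) 2]
  rw [hJ, ← hb]
  set O := ∏' k : ℕ, (1 + p ^ (2 * k + 1))
  set E := ∏' k : ℕ, (1 - (p ^ 2) ^ (k + 1))
  set b := ∏' k : ℕ, (1 + (p ^ 2) ^ (k + 1))
  set a := ∏' k : ℕ, (1 - p ^ (k + 1))
  rw [← hoe] at ha
  linear_combination E ^ 3 * (O * b * a + E) * ha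

/-- The product evaluation of `∑ p ^ (m ^ 2 + m)`. -/
lemma tsum_zpow_sq_mul_zpow {p : ℂ} (hp : p ≠ 0) (hp1 : ‖p‖ < 1)
    (hs : Summable fun m : ℤ ↦ p ^ (m ^ 2) * p ^ m) :
    (∑' m : ℤ, p ^ (m ^ 2) * p ^ m) * ∏' k : ℕ, (1 - (p ^ 2) ^ (k + 1)) =
      2 * (∏' k : ℕ, (1 - (p ^ 2) ^ (2 * (k + 1)))) ^ 2 := by
  have hq : ‖p ^ 2‖ < 1 := by
    rw [norm_pow]; exact pow_lt_one₀ (norm_nonneg p) hp1 two_ne_zero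
  have hb := tprod_one_add_pow_mul hq
  have hm := multipliable_one_add_pow hq
  have hE := tprod_one_sub_pow_ne_zero hq
  have hlim := (tendsto_jacobiTripleProduct hp hp1 hp hs).comp (tendsto_add_atTop_nat 1)
  have hlim' := (hm.tendsto_prod_tprod_nat.comp (tendsto_add_atTop_nat 1)).mul
    (hm.tendsto_prod_tprod_nat.const_mul 2)
  have hJ := tendsto_nhds_unique hlim (hlim'.congr fun n ↦ ?_)
  · rw [inv_mul_eq_iff_eq_mul₀ hE] at hJ
    simp_rw [pow_mul (p ^ 2) 2]
    rw [hJ, ← hb]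
    ring
  · simp only [Function.comp_apply]
    rw [Finset.prod_mul_distrib]
    congr 1
    · exact Finset.prod_congr rfl fun k _ ↦ by rw [← pow_mul, ← pow_succ']; ring
    · rw [Finset.prod_range_succ', mul_comm]
      congr 1
      · refine Finset.prod_congr rfl fun k _ ↦ ?_
        rw [← pow_mul]
        field_simp
        ring
      · simp [hp]; norm_num

lemma summable_norm_theta00 {τ : ℂ} (hτ : 0 < τ.im) (z : ℂ) :
    Summable fun n : ℤ ↦ ‖Complex.exp (2*(π:ℂ)*Complex.I*(n:ℂ)*z) *
      Complex.exp (2*(π:ℂ)*Complex.I*τ*((n:ℂ)^2/2))‖ := by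
  refine ((summable_jacobiTheta₂_term_iff z τ).mpr hτ).norm.congr fun n ↦ ?_
  rw [jacobiTheta₂_term, ← Complex.exp_add]
  ring_nf

lemma summable_norm_theta10 {τ : ℂ} (hτ : 0 < τ.im) (z : ℂ) :
    Summable fun n : ℤ ↦ ‖Complex.exp (2*(π:ℂ)*Complex.I*((n:ℂ)+1/2)*z) *
      Complex.exp (2*(π:ℂ)*Complex.I*τ*((1/2)*((n:ℂ)+1/2)^2))‖ := by
  refine (((summable_jacobiTheta₂_term_iff (z + τ / 2) τ).mpr hτ).mul_left
    (Complex.exp (π * Complex.I * (z + τ / 4)))).norm.congr fun n ↦ ?_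
  rw [jacobiTheta₂_term, ← Complex.exp_add, ← Complex.exp_add]
  ring_nf

/-- A sum over `ℤ × ℤ` splits along a bijection from two disjoint copies of `ℤ × ℤ`. -/
lemma tsum_eq_add_of_bijective {f g h : ℤ × ℤ → ℂ} (e : (ℤ × ℤ) ⊕ (ℤ × ℤ) → ℤ × ℤ)
    (he : Function.Bijective e) (hg : Summable g) (hh : Summable h)
    (hfg : ∀ x, f (e (.inl x)) = g x) (hfh : ∀ x, f (e (.inr x)) = h x) :
    ∑' x, f x = ∑' x, g x + ∑' x, h x := by
  rw [← (Equiv.ofBijective e he).tsum_eq]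
  exact HasSum.tsum_eq (HasSum.sum (hg.hasSum.congr_fun hfg) (hh.hasSum.congr_fun hfh))

lemma tsum_sq_add_tsum_sq {a b c d : ℤ → ℂ} (ha : Summable (‖a ·‖)) (hb : Summable (‖b ·‖))
    (hc : Summable (‖c ·‖)) (hd : Summable (‖d ·‖))
    (heven : ∀ m n, c (m - n) * d (m + n) = a m * a n)
    (hodd : ∀ m n, c (m - n) * d (m + n + 1) = b m * b n) :
    (∑' n, a n) ^ 2 + (∑' n, b n) ^ 2 = (∑' n, c n) * ∑' n, d n := by
  rw [sq, sq, tsum_mul_tsum_of_summable_norm ha ha, tsum_mul_tsum_of_summable_norm hb hb,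
    tsum_mul_tsum_of_summable_norm hc hd]
  symm
  refine tsum_eq_add_of_bijective
    (Sum.elim (fun x ↦ (x.1 - x.2, x.1 + x.2)) (fun x ↦ (x.1 - x.2, x.1 + x.2 + 1))) ⟨?_, ?_⟩
    (summable_mul_of_summable_norm ha ha) (summable_mul_of_summable_norm hb hb)
    (fun x ↦ heven x.1 x.2) (fun x ↦ hodd x.1 x.2)
  · rintro (⟨a, b⟩ | ⟨a, b⟩) (⟨c, d⟩ | ⟨c, d⟩) h <;>
      simp only [Sum.elim_inl, Sum.elim_inr, Prod.mk.injEq, Sum.inl.injEq, Sum.inr.injEq,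
        reduceCtorEq] at h ⊢ <;> omega
  · rintro ⟨d, s⟩
    obtain ⟨m, hm | hm⟩ := Int.even_or_odd' (s + d)
    · exact ⟨.inl (m, s - m), by simp only [Sum.elim_inl, Prod.mk.injEq]; omega⟩
    · exact ⟨.inr (m, s - m - 1), by simp only [Sum.elim_inr, Prod.mk.injEq]; omega⟩

lemma two_mul_tsum_mul_tsum {a b c d : ℤ → ℂ} (ha : Summable (‖a ·‖)) (hb : Summable (‖b ·‖))
    (hc : Summable (‖c ·‖)) (hd : Summable (‖d ·‖))
    (hodd : ∀ m n, c (m - n - 1) * d (m + n) = a m * b n)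
    (heven : ∀ m n, c (n - m) * d (m + n) = a m * b n) :
    2 * ((∑' n, a n) * ∑' n, b n) = (∑' n, c n) * ∑' n, d n := by
  rw [two_mul, tsum_mul_tsum_of_summable_norm ha hb, tsum_mul_tsum_of_summable_norm hc hd]
  symm
  refine tsum_eq_add_of_bijective
    (Sum.elim (fun x ↦ (x.1 - x.2 - 1, x.1 + x.2)) (fun x ↦ (x.2 - x.1, x.1 + x.2))) ⟨?_, ?_⟩
    (summable_mul_of_summable_norm ha hb) (summable_mul_of_summable_norm ha hb)
    (fun x ↦ hodd x.1 x.2) (fun x ↦ heven x.1 x.2)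
  · rintro (⟨a, b⟩ | ⟨a, b⟩) (⟨c, d⟩ | ⟨c, d⟩) h <;>
      simp only [Sum.elim_inl, Sum.elim_inr, Prod.mk.injEq, Sum.inl.injEq, Sum.inr.injEq,
        reduceCtorEq] at h ⊢ <;> omega
  · rintro ⟨d, s⟩
    obtain ⟨m, hm | hm⟩ := Int.even_or_odd' (s + d)
    · exact ⟨.inr (s - m, m), by simp only [Sum.elim_inr, Prod.mk.injEq]; omega⟩
    · exact ⟨.inl (m + 1, s - m - 1), by simp only [Sum.elim_inl, Prod.mk.injEq]; omega⟩

lemma theta00_sq_add_theta10_sq {τ : ℂ} (hτ : 0 < τ.im) (z : ℂ) :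
    theta00 (2 * τ) z ^ 2 + theta10 (2 * τ) z ^ 2 = theta00 τ 0 * theta00 τ z := by
  have h2τ : 0 < (2 * τ).im := by simpa using hτ
  refine tsum_sq_add_tsum_sq (summable_norm_theta00 h2τ z) (summable_norm_theta10 h2τ z)
    (summable_norm_theta00 hτ 0) (summable_norm_theta00 hτ z) (fun m n ↦ ?_) (fun m n ↦ ?_)
  all_goals
    simp only [← Complex.exp_add]
    push_cast
    ring_nf

lemma two_mul_theta00_mul_theta10 {τ : ℂ} (hτ : 0 < τ.im) (z : ℂ) :
    2 * (theta00 (2 * τ) z * theta10 (2 * τ) z) = theta10 τ 0 * theta10 τ z := by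
  have h2τ : 0 < (2 * τ).im := by simpa using hτ
  refine two_mul_tsum_mul_tsum (summable_norm_theta00 h2τ z) (summable_norm_theta10 h2τ z)
    (summable_norm_theta10 hτ 0) (summable_norm_theta10 hτ z) (fun m n ↦ ?_) (fun m n ↦ ?_)
  all_goals
    simp only [← Complex.exp_add]
    push_cast
    ring_nf

lemma norm_exp_pi_I_mul_lt_one {τ : ℂ} (hτ : 0 < τ.im) :
    ‖Complex.exp (π * Complex.I * τ)‖ < 1 := by
  rw [Complex.norm_exp, Real.exp_lt_one_iff]
  simpa using mul_pos Real.pi_pos hτ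

lemma theta00_zero_eq (τ : ℂ) :
    theta00 τ 0 = ∑' m : ℤ, Complex.exp (π * Complex.I * τ) ^ (m ^ 2) := by
  rw [theta00]
  refine tsum_congr fun m ↦ ?_
  rw [← Complex.exp_int_mul, ← Complex.exp_add]
  push_cast
  ring_nf

lemma theta10_zero_eq (τ : ℂ) :
    theta10 τ 0 = Complex.exp (π * Complex.I * τ / 4) *
      ∑' m : ℤ, Complex.exp (π * Complex.I * τ) ^ (m ^ 2) *
        Complex.exp (π * Complex.I * τ) ^ m := by
  rw [theta10, ← tsum_mul_left]
  refine tsum_congr fun m ↦ ?_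
  rw [← Complex.exp_int_mul, ← Complex.exp_int_mul, ← Complex.exp_add, ← Complex.exp_add,
    ← Complex.exp_add]
  push_cast
  ring_nf

lemma dedekindEta_eq (τ : ℂ) :
    dedekindEta τ = Complex.exp (π * Complex.I * τ / 12) *
      ∏' k : ℕ, (1 - Complex.exp (2 * π * Complex.I * τ) ^ (k + 1)) := by
  rw [dedekindEta]
  congr 1
  refine tprod_congr fun k ↦ ?_
  rw [← Complex.exp_nat_mul]
  push_cast
  ring_nf

lemma dedekindEta_ne_zero {τ : ℂ} (hτ : 0 < τ.im) : dedekindEta τ ≠ 0 := by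
  rw [dedekindEta_eq]
  refine mul_ne_zero (Complex.exp_ne_zero _) (tprod_one_sub_pow_ne_zero ?_)
  rw [show 2 * π * Complex.I * τ = π * Complex.I * (2 * τ) by ring]
  exact norm_exp_pi_I_mul_lt_one (by simpa using hτ)

lemma theta00_zero_mul_eta {τ : ℂ} (hτ : 0 < τ.im) :
    2 * theta00 τ 0 * (dedekindEta (τ / 2) ^ 2 * dedekindEta (2 * τ) ^ 4) =
      dedekindEta τ ^ 6 * theta10 τ 0 := by
  set p := Complex.exp (π * Complex.I * τ) with hpdef
  have hp : p ≠ 0 := Complex.exp_ne_zero _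
  have hp1 : ‖p‖ < 1 := norm_exp_pi_I_mul_lt_one hτ
  have s0 : Summable fun m : ℤ ↦ p ^ (m ^ 2) := by
    refine (summable_norm_theta00 hτ 0).of_norm.congr fun m ↦ ?_
    rw [hpdef, ← Complex.exp_int_mul, ← Complex.exp_add]
    push_cast
    ring_nf
  have s1 : Summable fun m : ℤ ↦ p ^ (m ^ 2) * p ^ m := by
    refine ((summable_norm_theta10 hτ 0).of_norm.mul_left
      (Complex.exp (-(π * Complex.I * τ / 4)))).congr fun m ↦ ?_
    rw [hpdef, ← Complex.exp_int_mul, ← Complex.exp_int_mul, ← Complex.exp_add,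
      ← Complex.exp_add, ← Complex.exp_add]
    push_cast
    ring_nf
  have h0 := tsum_zpow_sq hp hp1 s0
  have h1 := tsum_zpow_sq_mul_zpow hp hp1 s1
  have e1 : Complex.exp (2 * π * Complex.I * τ) = p ^ 2 := by
    rw [hpdef, ← Complex.exp_nat_mul]; push_cast; ring_nf
  have e2 : Complex.exp (2 * π * Complex.I * (2 * τ)) = (p ^ 2) ^ 2 := by
    rw [← e1, ← Complex.exp_nat_mul]; push_cast; ring_nf
  have e3 : Complex.exp (2 * π * Complex.I * (τ / 2)) = p := by
    rw [hpdef]; ring_nf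
  rw [theta00_zero_eq, theta10_zero_eq, dedekindEta_eq, dedekindEta_eq, dedekindEta_eq, e1, e2, e3]
  rw [← hpdef]
  simp_rw [← pow_mul (p ^ 2) 2]
  have hexp : Complex.exp (π * Complex.I * (τ / 2) / 12) ^ 2 *
      Complex.exp (π * Complex.I * (2 * τ) / 12) ^ 4 =
      Complex.exp (π * Complex.I * τ / 12) ^ 6 * Complex.exp (π * Complex.I * τ / 4) := by
    simp only [← Complex.exp_nat_mul, ← Complex.exp_add]
    push_cast
    ring_nf
  linear_combination
    2 * (∑' m : ℤ, p ^ (m ^ 2)) * (∏' k : ℕ, (1 - p ^ (k + 1))) ^ 2 *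
        (∏' k : ℕ, (1 - (p ^ 2) ^ (2 * (k + 1)))) ^ 4 * hexp +
      Complex.exp (π * Complex.I * τ / 12) ^ 6 * Complex.exp (π * Complex.I * τ / 4) *
        (2 * (∏' k : ℕ, (1 - (p ^ 2) ^ (2 * (k + 1)))) ^ 2 * h0 -
          (∏' k : ℕ, (1 - (p ^ 2) ^ (k + 1))) ^ 5 * h1)

theorem stmt14 (τ z : ℂ) (hτ : 0 < τ.im)
    (h1 : theta10 (2*τ) z ≠ 0) (h2 : theta00 (2*τ) z ≠ 0) (h3 : theta10 τ z ≠ 0) :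
    theta00 (2*τ) z / theta10 (2*τ) z + theta10 (2*τ) z / theta00 (2*τ) z =
      ((dedekindEta τ)^6 / ((dedekindEta (τ/2))^2 * (dedekindEta (2*τ))^4)) * (theta00 τ z / theta10 τ z) := by
  have hsum := theta00_sq_add_theta10_sq hτ z
  have hprod := two_mul_theta00_mul_theta10 hτ z
  have heta := theta00_zero_mul_eta hτ
  have e1 : dedekindEta (τ / 2) ≠ 0 :=
    dedekindEta_ne_zero (by simpa using hτ)
  have e2 : dedekindEta (2 * τ) ≠ 0 := dedekindEta_ne_zero (by simpa using hτ)
  have h0 : theta10 τ 0 ≠ 0 :=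
    left_ne_zero_of_mul (hprod ▸ mul_ne_zero two_ne_zero (mul_ne_zero h2 h1))
  have hratio : dedekindEta τ ^ 6 / (dedekindEta (τ / 2) ^ 2 * dedekindEta (2 * τ) ^ 4) =
      2 * theta00 τ 0 / theta10 τ 0 := by
    rw [div_eq_div_iff (by positivity) h0]
    exact heta.symm
  rw [hratio, div_add_div _ _ h1 h2, div_mul_div_comm,
    div_eq_div_iff (mul_ne_zero h1 h2) (mul_ne_zero h0 h3)]
  linear_combination theta10 τ 0 * theta10 τ z * hsum - theta00 τ 0 * theta00 τ z * hprod

end
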